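/- For every real number x with 0 ≤ x ≤ 1 there exists a set A ∈ 𝓘 such that x is a nonnegative integer combination of elements of A. -/

import Mathlib

/-- `A ∈ 𝓘`: `A` is a finite subset of `[0,1]`, linearly independent over `ℚ`, and
`1` is a strictly positive integer combination of the elements of `A`. -/
def MemI (A : Finset ℝ) : Prop :=
  (∀ a ∈ A, a ∈ Set.Icc (0 : ℝ) 1) ∧
  LinearIndependent ℚ (fun a : (A : Set ℝ) => (a : ℝ)) ∧
  ∃ z : ℝ → ℕ, (∀ a ∈ A, 0 < z a) ∧ (1 : ℝ) = ∑ a ∈ A, (z a : ℝ) * a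

/-- For every real number x with 0 ≤ x ≤ 1 there exists a set A ∈ 𝓘 such
that x is a nonnegative integer combination of elements of A. -/
theorem stmt_3 (x : ℝ) (hx0 : 0 ≤ x) (hx1 : x ≤ 1) :
    ∃ A : Finset ℝ, MemI A ∧ ∃ z : ℝ → ℕ, x = ∑ a ∈ A, (z a : ℝ) * a := by
  by_cases hx : ∃ q : ℚ, (q : ℝ) = x
  · obtain ⟨q, rfl⟩ := hx
    have hd : (0 : ℝ) < q.den := by exact_mod_cast q.den_pos
    have hd1 : (1 : ℝ) ≤ q.den := by exact_mod_cast q.den_pos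
    have hq0 : 0 ≤ q := by exact_mod_cast hx0
    refine ⟨{(1 : ℝ) / q.den}, ⟨?_, ?_, fun _ => q.den, ?_, ?_⟩, fun _ => q.num.toNat, ?_⟩
    · intro a ha
      rw [Finset.mem_singleton] at ha
      subst ha
      exact ⟨by positivity, by rw [div_le_one hd]; exact hd1⟩
    · rw [Finset.coe_singleton]
      exact LinearIndepOn.singleton (v := id) (by simp)
    · intro a _
      exact q.den_pos
    · rw [Finset.sum_singleton]; field_simp
    · rw [Finset.sum_singleton]
      have h1 : ((q.num.toNat : ℕ) : ℝ) = (q.num : ℝ) := by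
        have := Int.toNat_of_nonneg (Rat.num_nonneg.2 hq0)
        exact_mod_cast congrArg (fun n : ℤ => (n : ℝ)) this
      rw [h1, mul_one_div, Rat.cast_def]
  · have hne : x ≠ 1 - x := by
      intro h
      exact hx ⟨1 / 2, by push_cast; linarith⟩
    refine ⟨{x, 1 - x}, ⟨?_, ?_, fun _ => 1, ?_, ?_⟩, fun a => if a = x then 1 else 0, ?_⟩
    · intro a ha
      rw [Finset.mem_insert, Finset.mem_singleton] at ha
      rcases ha with rfl | rfl
      · exact ⟨hx0, hx1⟩
      · constructor <;> linarith
    · rw [Finset.coe_pair]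
      refine (LinearIndepOn.pair_iff (R := ℚ) (id : ℝ → ℝ) hne).2 ?_
      intro s t h
      simp only [id, Rat.smul_def] at h
      have hst : s = t := by
        by_contra hst
        have h2 : ((s : ℝ) - t) ≠ 0 := by
          rw [sub_ne_zero]; exact_mod_cast hst
        refine hx ⟨-t / (s - t), ?_⟩
        push_cast
        rw [div_eq_iff h2]
        linarith
      subst hst
      have : (s : ℝ) = 0 := by linarith
      have : s = 0 := by exact_mod_cast this
      exact ⟨this, this⟩
    · intro a _
      exact Nat.one_pos
    · rw [Finset.sum_pair hne]; simp
    · rw [Finset.sum_pair hne]; simp [hne.symm]
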